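/- Let (A(n))_{n∈ℤ} be a sequence of i.i.d. random d×d matrices with entries in ℝ_max such that the positive part of max_{ij} A_{ij}(0) is integrable, A(0) almost surely has at least one finite entry on each row, and the graph 𝒢(A) is strongly connected. Then for every i ∈ {1,…,d}, lim_n (1/n)·y_i(n,0) = γ(A) almost surely. -/

import Mathlib

open Filter MeasureTheory ProbabilityTheory Topology

noncomputable section

/-- Max-plus action of a `d × d` matrix over `ℝ_max = ℝ ∪ {-∞}` (encoded as `EReal`,
with `⊤` never used) on a vector: `(A ⊗ v) i = max_j (A i j + v j)`. -/
def mpVec {d : ℕ} (A : Fin d → Fin d → EReal) (v : Fin d → EReal) : Fin d → EReal :=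
  fun i => ⨆ j, A i j + v j

/-- `appProd n f v = f 0 ⊗ f 1 ⊗ ⋯ ⊗ f (n-1) ⊗ v` in the max-plus algebra. -/
def appProd {d : ℕ} : ℕ → (ℕ → Fin d → Fin d → EReal) → (Fin d → EReal) → Fin d → EReal
  | 0, _, v => v
  | n + 1, f, v => mpVec (f 0) (appProd n (fun k => f (k + 1)) v)

/-- `xvec f n = f (n-1) ⊗ ⋯ ⊗ f 0 ⊗ 0`; with `f m = A(m)` this is `x(n, 0)`. -/
def xvec {d : ℕ} (f : ℕ → Fin d → Fin d → EReal) : ℕ → Fin d → EReal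
  | 0 => fun _ => 0
  | n + 1 => mpVec (f n) (xvec f n)

/-- `lvec n f = f 0 ⊗ f 1 ⊗ ⋯ ⊗ f (n-1) ⊗ 0`; with `f k = A(-(k+1))` this is `y(n, 0)`. -/
def lvec {d : ℕ} (n : ℕ) (f : ℕ → Fin d → Fin d → EReal) : Fin d → EReal :=
  appProd n f (fun _ => 0)

/-- Multiplication of an extended real by `1/n`. -/
def mpScale (n : ℕ) (x : EReal) : EReal := (((n : ℝ)⁻¹ : ℝ) : EReal) * x

open Classical in
/-- Restriction of a matrix to the indices in `c`: entries outside `c × c` are `-∞`. -/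
def mpRestrict {d : ℕ} (c : Set (Fin d)) (M : Fin d → Fin d → EReal) : Fin d → Fin d → EReal :=
  fun i j => if i ∈ c ∧ j ∈ c then M i j else ⊥

/-- Arc relation of the graph `𝒢(A)` of a random matrix `A`:
`(i,j)` is an arc iff `A ω i j ≠ -∞` with positive probability. -/
def arcRel {Ω : Type*} [MeasurableSpace Ω] (μ : Measure Ω) {d : ℕ}
    (A : Ω → Fin d → Fin d → EReal) (i j : Fin d) : Prop :=
  μ {ω | A ω i j ≠ ⊥} ≠ 0

/-- `c` is a strongly connected component of the graph with arc relation `r`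
(the mutual-reachability class of some node; nodes on no circuit are alone in their class). -/
def IsSCC {d : ℕ} (r : Fin d → Fin d → Prop) (c : Set (Fin d)) : Prop :=
  ∃ i, c = {j | Relation.ReflTransGen r i j ∧ Relation.ReflTransGen r j i}

/-- `i → c` : the node `i` reaches the component `c`. -/
def nodeReach {d : ℕ} (r : Fin d → Fin d → Prop) (i : Fin d) (c : Set (Fin d)) : Prop :=
  ∃ j ∈ c, Relation.ReflTransGen r i j

/-- `c → c'` : the component `c` reaches the component `c'`. -/
def sccReach {d : ℕ} (r : Fin d → Fin d → Prop) (c c' : Set (Fin d)) : Prop :=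
  ∃ i ∈ c, nodeReach r i c'

/-- `γ^{[c]} = max { γ^{(c')} : c → c' }`, where `γ` assigns to each s.c.c. its
maximal Lyapunov exponent. -/
def gammaBrack {d : ℕ} (r : Fin d → Fin d → Prop) (γ : Set (Fin d) → EReal)
    (c : Set (Fin d)) : EReal :=
  ⨆ c', ⨆ (_ : IsSCC r c' ∧ sccReach r c c'), γ c'

/-- The set of nodes `H_c = {c}` : nodes `i` with `c → i → c̃` for some s.c.c. `c̃`
realizing `γ^{(c̃)} = γ^{[c]}`. -/
def Hset {d : ℕ} (r : Fin d → Fin d → Prop) (γ : Set (Fin d) → EReal)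
    (c : Set (Fin d)) : Set (Fin d) :=
  {i | ∃ ct, IsSCC r ct ∧ (∃ j ∈ c, Relation.ReflTransGen r j i) ∧ nodeReach r i ct ∧
    γ ct = gammaBrack r γ c}

/-- `max { γ^{(c)} : c s.c.c. with i → c }`. -/
def limFormula {d : ℕ} (r : Fin d → Fin d → Prop) (γ : Set (Fin d) → EReal) (i : Fin d) : EReal :=
  ⨆ c, ⨆ (_ : IsSCC r c ∧ nodeReach r i c), γ c

section Deterministic

variable {d : ℕ}

/-- One-step image of a set of nodes under the arcs of finite weight of a matrix. -/
def succSet (M : Fin d → Fin d → EReal) (S : Finset (Fin d)) : Finset (Fin d) :=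
  open Classical in Finset.univ.filter fun j => ∃ i ∈ S, M i j ≠ ⊥

lemma mem_succSet {M : Fin d → Fin d → EReal} {S : Finset (Fin d)} {j : Fin d} :
    j ∈ succSet M S ↔ ∃ i ∈ S, M i j ≠ ⊥ := by
  classical simp [succSet]

/-- Image of a set of nodes after `n` steps along `f 0, …, f (n-1)`. -/
def reachSet : ℕ → (ℕ → Fin d → Fin d → EReal) → Finset (Fin d) → Finset (Fin d)
  | 0, _, S => S
  | n + 1, f, S => reachSet n (fun k => f (k + 1)) (succSet (f 0) S)

/-- Maximal weight of the paths of length `n` issued from a set of nodes. -/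
def setMax (n : ℕ) (f : ℕ → Fin d → Fin d → EReal) (S : Finset (Fin d)) : EReal :=
  S.sup (lvec n f)

/-- Positive part of the largest entry of a matrix. -/
def posMax (M : Fin d → Fin d → EReal) : ℝ := ((⨆ i, ⨆ j, M i j) ⊔ 0).toReal

lemma posMax_nonneg (M : Fin d → Fin d → EReal) : 0 ≤ posMax M :=
  EReal.toReal_nonneg le_sup_right

lemma le_posMax {M : Fin d → Fin d → EReal} (hM : ∀ i j, M i j ≠ ⊤) (i j : Fin d) :
    M i j ≤ (posMax M : EReal) := by
  have hlt : (⨆ i, ⨆ j, M i j) < ⊤ := by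
    simp_rw [← Finset.sup_univ_eq_iSup]
    rw [Finset.sup_lt_iff bot_lt_top]
    intro i _
    rw [Finset.sup_lt_iff bot_lt_top]
    exact fun j _ => (hM i j).lt_top
  have hne : ((⨆ i, ⨆ j, M i j) ⊔ 0) ≠ ⊤ := by
    rw [Ne, max_eq_top]; simp [hlt.ne]
  rw [posMax, EReal.coe_toReal hne (ne_of_gt (lt_of_lt_of_le EReal.bot_lt_zero le_sup_right))]
  exact le_sup_of_le_left (le_iSup₂_of_le i j le_rfl)

lemma lvec_succ (n : ℕ) (f : ℕ → Fin d → Fin d → EReal) :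
    lvec (n + 1) f = mpVec (f 0) (lvec n fun k => f (k + 1)) := rfl

lemma appProd_congr {n : ℕ} {f g : ℕ → Fin d → Fin d → EReal} {v : Fin d → EReal}
    (h : ∀ k < n, f k = g k) : appProd n f v = appProd n g v := by
  induction n generalizing f g with
  | zero => rfl
  | succ n ih =>
    simp only [appProd]
    rw [h 0 (by omega), ih fun k hk => h (k + 1) (by omega)]

lemma appProd_add (a b : ℕ) (f : ℕ → Fin d → Fin d → EReal) (v : Fin d → EReal) :
    appProd (a + b) f v = appProd a f (appProd b (fun k => f (k + a)) v) := by
  induction a generalizing f with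
  | zero => simp [appProd]
  | succ a ih =>
    rw [Nat.add_right_comm]
    simp only [appProd, ih]
    congr! 5

lemma xvec_eq_lvec (f : ℤ → Fin d → Fin d → EReal) (n : ℕ) :
    xvec (fun m => f m) n = lvec n fun k => f (n - 1 - k) := by
  induction n with
  | zero => rfl
  | succ n ih =>
    rw [lvec_succ, xvec, ih]
    congr 2
    · push_cast; ring_nf
    · funext k
      push_cast; ring_nf

/-- Replacing the terminal vector by an upper bound over the reachable nodes. -/
lemma appProd_le_lvec_add {a : ℕ} {f : ℕ → Fin d → Fin d → EReal} {S : Finset (Fin d)}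
    {w : Fin d → EReal} {C : EReal} (hw : ∀ j ∈ reachSet a f S, w j ≤ C) :
    ∀ i ∈ S, appProd a f w i ≤ lvec a f i + C := by
  induction a generalizing f S with
  | zero => intro i hi; simpa [appProd, lvec] using hw i hi
  | succ a ih =>
    intro i hi
    rw [lvec_succ]
    refine iSup_le fun j => ?_
    by_cases hj : f 0 i j = ⊥
    · simp [hj]
    · calc f 0 i j + appProd a (fun k => f (k + 1)) w j
          ≤ f 0 i j + (lvec a (fun k => f (k + 1)) j + C) :=
            add_le_add le_rfl (ih hw j (mem_succSet.2 ⟨i, hi, hj⟩))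
        _ = f 0 i j + lvec a (fun k => f (k + 1)) j + C := (add_assoc _ _ _).symm
        _ ≤ _ := add_le_add (le_iSup (fun j => f 0 i j + lvec a (fun k => f (k + 1)) j) j) le_rfl

lemma setMax_add_le (a b : ℕ) (f : ℕ → Fin d → Fin d → EReal) (S : Finset (Fin d)) :
    setMax (a + b) f S ≤ setMax a f S + setMax b (fun k => f (k + a)) (reachSet a f S) := by
  refine Finset.sup_le fun i hi => ?_
  rw [lvec, appProd_add]
  refine (appProd_le_lvec_add (C := setMax b (fun k => f (k + a)) (reachSet a f S))
    (fun j hj => ?_) i hi).trans (add_le_add (Finset.le_sup hi) le_rfl)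
  exact Finset.le_sup (f := lvec b fun k => f (k + a)) hj

lemma setMax_mono (n : ℕ) (f : ℕ → Fin d → Fin d → EReal) {S T : Finset (Fin d)} (h : S ⊆ T) :
    setMax n f S ≤ setMax n f T := Finset.sup_mono h

lemma setMax_zero_le (f : ℕ → Fin d → Fin d → EReal) (S : Finset (Fin d)) :
    setMax 0 f S ≤ 0 := Finset.sup_le fun _ _ => le_rfl

lemma setMax_one_le {f : ℕ → Fin d → Fin d → EReal} (hf : ∀ i j, f 0 i j ≠ ⊤)
    (S : Finset (Fin d)) : setMax 1 f S ≤ (posMax (f 0) : EReal) := by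
  refine Finset.sup_le fun i _ => iSup_le fun j => ?_
  simpa [appProd] using le_posMax hf i j

lemma setMax_le_sum {f : ℕ → Fin d → Fin d → EReal} (hf : ∀ k i j, f k i j ≠ ⊤) (n : ℕ)
    (S : Finset (Fin d)) :
    setMax n f S ≤ ((∑ k ∈ Finset.range n, posMax (f k) : ℝ) : EReal) := by
  induction n generalizing f S with
  | zero => simpa using setMax_zero_le f S
  | succ n ih =>
    rw [Nat.add_comm, Finset.sum_range_add]
    refine (setMax_add_le 1 n f S).trans ?_
    rw [EReal.coe_add]
    refine add_le_add ?_ ?_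
    · simpa using setMax_one_le (hf 0) S
    · simpa [Nat.add_comm] using ih (f := fun k => f (k + 1)) (fun k => hf (k + 1)) _

/-- The paths issued from `S` grow at least at rate `c`, up to an additive constant. -/
def growsFrom (c : ℝ) (S : Finset (Fin d)) : Set (ℕ → Fin d → Fin d → EReal) :=
  {f | ∃ K : ℕ, ∀ n : ℕ, ((c * n - K : ℝ) : EReal) ≤ setMax n f S}

lemma growsFrom_mono (c : ℝ) {S T : Finset (Fin d)} (h : S ⊆ T) :
    growsFrom c S ⊆ growsFrom c T :=
  fun f ⟨K, hK⟩ => ⟨K, fun n => (hK n).trans (setMax_mono n f h)⟩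

/-- Growth from the successors of `S` for the shifted sequence implies growth from `S`. -/
lemma growsFrom_of_shift {c : ℝ} {S : Finset (Fin d)} {f : ℕ → Fin d → Fin d → EReal}
    (h : (fun k => f (k + 1)) ∈ growsFrom c (succSet (f 0) S)) : f ∈ growsFrom c S := by
  obtain ⟨K, hK⟩ := h
  obtain ⟨K', hK'⟩ : ∃ K' : ℕ, ∀ i j, f 0 i j ≠ ⊥ → ((-K' : ℝ) : EReal) ≤ f 0 i j := by
    have (i j : Fin d) : ∃ K' : ℕ, f 0 i j ≠ ⊥ → ((-K' : ℝ) : EReal) ≤ f 0 i j := by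
      induction f 0 i j with
      | bot => exact ⟨0, by simp⟩
      | top => exact ⟨0, by simp⟩
      | coe x =>
        obtain ⟨N, hN⟩ := exists_nat_ge (-x)
        exact ⟨N, fun _ => EReal.coe_le_coe_iff.2 (by linarith)⟩
    choose N hN using this
    refine ⟨∑ i, ∑ j, N i j, fun i j hij => le_trans ?_ (hN i j hij)⟩
    have h1 : N i j ≤ ∑ i, ∑ j, N i j :=
      (Finset.single_le_sum (f := fun j => N i j) (fun _ _ => Nat.zero_le _)
        (Finset.mem_univ j)).trans
      (Finset.single_le_sum (f := fun i => ∑ j, N i j) (fun _ _ => Nat.zero_le _)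
        (Finset.mem_univ i))
    have h2 : (N i j : ℝ) ≤ ((∑ i, ∑ j, N i j : ℕ) : ℝ) := by exact_mod_cast h1
    exact_mod_cast (neg_le_neg h2)
  obtain ⟨N, hN⟩ := exists_nat_ge (c + K + K')
  have key (n : ℕ) : ∃ i ∈ S, ((c * n - K - K' : ℝ) : EReal) ≤ lvec (n + 1) f i := by
    have h1 := hK n
    rw [setMax, Finset.le_sup_iff (EReal.bot_lt_coe _)] at h1
    obtain ⟨j, hj, hjn⟩ := h1
    obtain ⟨i, hi, hij⟩ := mem_succSet.1 hj
    refine ⟨i, hi, ?_⟩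
    rw [lvec_succ]
    refine le_trans ?_ (le_iSup (fun j => f 0 i j + lvec n (fun k => f (k + 1)) j) j)
    rw [show c * n - K - K' = -K' + (c * n - K) by ring, EReal.coe_add]
    exact add_le_add (hK' i j hij) hjn
  refine ⟨N, fun n => ?_⟩
  cases n with
  | zero =>
    obtain ⟨i, hi, -⟩ := key 0
    refine le_trans ?_ (Finset.le_sup hi)
    simp only [lvec, appProd]
    exact_mod_cast (by simp)
  | succ n =>
    obtain ⟨i, hi, hin⟩ := key n
    refine le_trans (le_trans ?_ hin) (Finset.le_sup hi)
    exact_mod_cast (by push_cast; linarith)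

lemma exists_setMax_lt_of_notMem_growsFrom {c : ℝ} {S : Finset (Fin d)} (hS : S.Nonempty)
    {f : ℕ → Fin d → Fin d → EReal} (h : f ∉ growsFrom c S) :
    ∃ m : ℕ, 1 ≤ m ∧ setMax m f S < ((c * m : ℝ) : EReal) := by
  simp only [growsFrom, Set.mem_ofPred_eq, not_exists, not_forall, not_le] at h
  obtain ⟨m, hm⟩ := h 0
  refine ⟨m, Nat.one_le_iff_ne_zero.2 ?_, by simpa using hm⟩
  rintro rfl
  obtain ⟨i, hi⟩ := hS
  have : (0 : EReal) ≤ setMax 0 f S := Finset.le_sup (f := lvec 0 f) hi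
  simp at hm
  exact absurd hm (not_lt.2 this)

/-- Sequences for which some set of the family `Z` has no path weight below rate `c` within
`L` steps. -/
def fastSet (Z : Set (Finset (Fin d))) (c : ℝ) (L : ℕ) : Set (ℕ → Fin d → Fin d → EReal) :=
  {f | ∃ S ∈ Z, ∀ m : ℕ, 1 ≤ m → m ≤ L → ((c * m : ℝ) : EReal) ≤ setMax m f S}

open Classical in
/-- Covering bound: blocks of rate below `c` are concatenated, the other steps are bounded by
the largest entries. -/
lemma setMax_le_of_cover {Z : Set (Finset (Fin d))} {c : ℝ} {L : ℕ} (n : ℕ)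
    {f : ℕ → Fin d → Fin d → EReal} (hf : ∀ k i j, f k i j ≠ ⊤)
    (hZ : ∀ k, ∀ S ∈ Z, succSet (f k) S ∈ Z) {S : Finset (Fin d)} (hS : S ∈ Z) :
    setMax n f S ≤ ((c * n + ∑ k ∈ Finset.range n,
      if (fun l => f (l + k)) ∈ fastSet Z c L ∨ n ≤ k + L then posMax (f k) + |c| else 0 : ℝ) :
        EReal) := by
  induction n using Nat.strong_induction_on generalizing f S with
  | _ n ih =>
  have hreach (m : ℕ) : ∀ (f : ℕ → Fin d → Fin d → EReal),
      (∀ k, ∀ S ∈ Z, succSet (f k) S ∈ Z) → ∀ S ∈ Z, reachSet m f S ∈ Z := by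
    induction m with
    | zero => intro f _ S hS; exact hS
    | succ m ihm => intro f hf S hS; exact ihm _ (fun k => hf (k + 1)) _ (hf 0 S hS)
  rcases Nat.eq_zero_or_pos n with rfl | hn
  · simpa using setMax_zero_le f S
  have step (m : ℕ) (hm : 1 ≤ m) (hmn : m ≤ n) (x : ℝ) (hx : setMax m f S ≤ (x : EReal))
      (hxs : x ≤ c * m + ∑ k ∈ Finset.range m,
        if (fun l => f (l + k)) ∈ fastSet Z c L ∨ n ≤ k + L then posMax (f k) + |c| else 0) :
      setMax n f S ≤ ((c * n + ∑ k ∈ Finset.range n,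
        if (fun l => f (l + k)) ∈ fastSet Z c L ∨ n ≤ k + L then posMax (f k) + |c| else 0 : ℝ) :
        EReal) := by
    obtain ⟨r, rfl⟩ := Nat.exists_eq_add_of_le hmn
    have h1 := ih r (by omega) (f := fun k => f (k + m)) (fun k => hf _) (fun k => hZ _)
      (hreach m f hZ S hS)
    refine (setMax_add_le m r f S).trans ((add_le_add hx h1).trans ?_)
    rw [← EReal.coe_add, EReal.coe_le_coe_iff, Finset.sum_range_add]
    have h2 : ∀ k, (if (fun l => f (l + k + m)) ∈ fastSet Z c L ∨ r ≤ k + L then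
        posMax (f (k + m)) + |c| else 0) = if (fun l => f (l + (m + k))) ∈ fastSet Z c L ∨
          m + r ≤ m + k + L then posMax (f (m + k)) + |c| else 0 := by
      intro k
      have e1 : (fun l => f (l + k + m)) = fun l => f (l + (m + k)) := by
        funext l; congr 1; ring
      have e2 : r ≤ k + L ↔ m + r ≤ m + k + L := by omega
      rw [e1, Nat.add_comm k m]
      simp only [e2]
    simp only [h2]
    push_cast
    linarith
  have one (h : f ∈ fastSet Z c L ∨ n ≤ L) : setMax n f S ≤ ((c * n + ∑ k ∈ Finset.range n,
      if (fun l => f (l + k)) ∈ fastSet Z c L ∨ n ≤ k + L then posMax (f k) + |c| else 0 : ℝ) :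
        EReal) := by
    refine step 1 le_rfl hn _ (setMax_one_le (hf 0) S) ?_
    simp only [Finset.range_one, Finset.sum_singleton, Nat.zero_add, Nat.add_zero]
    rw [if_pos h]
    have := neg_abs_le c
    push_cast
    linarith
  by_cases hL : n ≤ L
  · exact one (.inr hL)
  by_cases hm : ∃ m : ℕ, 1 ≤ m ∧ m ≤ L ∧ setMax m f S < ((c * m : ℝ) : EReal)
  · obtain ⟨m, h1, h2, h3⟩ := hm
    refine step m h1 (by omega) _ h3.le (le_add_of_nonneg_right (Finset.sum_nonneg fun k _ => ?_))
    have := posMax_nonneg (f k)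
    split_ifs <;> positivity
  · push Not at hm
    exact one (.inl ⟨S, hS, hm⟩)

end Deterministic

lemma tendsto_integral_indicator_zero {α : Type*} [MeasurableSpace α] {P : Measure α}
    {u : α → ℝ} (hu : Integrable u P) {s : ℕ → Set α}
    (hs : ∀ n, MeasurableSet (s n)) (hlim : ∀ᵐ x ∂P, ∀ᶠ n in atTop, x ∉ s n) :
    Tendsto (fun n => ∫ x, (s n).indicator u x ∂P) atTop (𝓝 0) := by
  have := tendsto_integral_of_dominated_convergence (μ := P) (F := fun n => (s n).indicator u)
    (f := fun _ => 0) (fun x => ‖u x‖) (fun n => hu.aestronglyMeasurable.indicator (hs n))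
    hu.norm (fun n => .of_forall fun x => norm_indicator_le_norm_self u x) ?_
  · simpa using this
  · filter_upwards [hlim] with x hx
    refine tendsto_const_nhds.congr' ?_
    filter_upwards [hx] with n hn
    simp [hn]

section Sequences

variable {α : Type*} [MeasurableSpace α] (P : Measure α) [IsProbabilityMeasure P]

/-- Prepend a term to a sequence. -/
def seqCons (x : α) (f : ℕ → α) : ℕ → α
  | 0 => x
  | k + 1 => f k

lemma measurable_seqCons : Measurable fun p : α × (ℕ → α) => seqCons p.1 p.2 := by
  refine measurable_pi_iff.2 fun k => ?_
  cases k with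
  | zero => exact measurable_fst
  | succ k => exact (measurable_pi_apply k).comp measurable_snd

lemma map_seqCons_infinitePi :
    (P.prod (Measure.infinitePi fun _ : ℕ => P)).map (fun p => seqCons p.1 p.2) =
      Measure.infinitePi fun _ : ℕ => P := by
  classical
  refine Measure.eq_infinitePi _ fun s t ht => ?_
  obtain ⟨N, hN⟩ : ∃ N, s ⊆ Finset.range (N + 1) :=
    ⟨s.sup id, fun k hk => Finset.mem_range.2 (Nat.lt_succ_of_le (Finset.le_sup (f := id) hk))⟩
  let t' : ℕ → Set α := fun k => if k ∈ s then t k else Set.univ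
  have ht' (k : ℕ) : MeasurableSet (t' k) := by
    simp only [t']; split_ifs; exacts [ht k, .univ]
  have hpi : Set.pi (s : Set ℕ) t = Set.pi (Finset.range (N + 1) : Set ℕ) t' := by
    ext f
    simp only [Set.mem_pi, Finset.mem_coe, t']
    refine ⟨fun h k _ => ?_, fun h k hk => ?_⟩
    · split_ifs with hk
      exacts [h k hk, trivial]
    · simpa [hk] using h k (hN hk)
  have hprod : ∏ k ∈ s, P (t k) = ∏ k ∈ Finset.range (N + 1), P (t' k) := by
    rw [← Finset.prod_subset hN fun k _ hk => by simp [t', hk]]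
    exact Finset.prod_congr rfl fun k hk => by simp [t', hk]
  have hpre : (fun p : α × (ℕ → α) => seqCons p.1 p.2) ⁻¹'
      Set.pi (Finset.range (N + 1) : Set ℕ) t' =
      t' 0 ×ˢ Set.pi (Finset.range N : Set ℕ) fun k => t' (k + 1) := by
    ext ⟨x, f⟩
    simp only [Set.mem_preimage, Set.mem_pi, Finset.mem_coe, Finset.mem_range, Set.mem_prod]
    refine ⟨fun h => ⟨h 0 (by omega), fun k hk => h (k + 1) (by omega)⟩, fun h k hk => ?_⟩
    cases k with
    | zero => exact h.1
    | succ k => exact h.2 k (by omega)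
  rw [hpi, hprod, Measure.map_apply measurable_seqCons
    (MeasurableSet.pi (Finset.countable_toSet _) fun k _ => ht' k), hpre, Measure.prod_prod,
    Measure.infinitePi_pi _ fun k _ => ht' (k + 1), Finset.prod_range_succ', mul_comm]

lemma measurePreserving_shift (n : ℕ) :
    MeasurePreserving (fun (f : ℕ → α) k => f (k + n)) (Measure.infinitePi fun _ : ℕ => P)
      (Measure.infinitePi fun _ : ℕ => P) :=
  ⟨by fun_prop, Measure.map_infinitePi_infinitePi_of_inj (P := fun _ : ℕ => P)
    (add_left_injective n)⟩

lemma infinitePi_apply_eq_lintegral_seqCons {s : Set (ℕ → α)} (hs : MeasurableSet s) :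
    (Measure.infinitePi fun _ : ℕ => P) s =
      ∫⁻ x, (Measure.infinitePi fun _ : ℕ => P) {f | seqCons x f ∈ s} ∂P := by
  conv_lhs => rw [← map_seqCons_infinitePi P, Measure.map_apply measurable_seqCons hs,
    Measure.prod_apply (measurable_seqCons hs)]
  rfl

/-- A set whose conditional probability given finitely many coordinates stays bounded away
from `1` is negligible. -/
lemma measure_eq_zero_of_forall_cylinder_le {q : ℝ} (hq0 : 0 ≤ q) (hq : q < 1)
    {H : Set (ℕ → α)} (hH : MeasurableSet H)
    (h : ∀ (K : ℕ) (F : Set (ℕ → α)), MeasurableSet F →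
      (∀ f g : ℕ → α, (∀ k < K, f k = g k) → (f ∈ F ↔ g ∈ F)) →
      (Measure.infinitePi fun _ : ℕ => P).real (F ∩ H) ≤
        q * (Measure.infinitePi fun _ : ℕ => P).real F) :
    (Measure.infinitePi fun _ : ℕ => P) H = 0 := by
  set ν := Measure.infinitePi fun _ : ℕ => P
  by_contra hne
  have hpos : 0 < ν.real H := ENNReal.toReal_pos hne (measure_ne_top _ _)
  set ε := (1 - q) * ν.real H / 4
  have hε : 0 < ε := by have : 0 < 1 - q := by linarith
                        positivity
  obtain ⟨F, hF, hFH⟩ := exists_measure_symmDiff_lt_of_generateFrom_isSetRing (μ := ν)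
    (C := measurableCylinders fun _ : ℕ => α)
    ⟨empty_mem_measurableCylinders _, fun s t hs ht => union_mem_measurableCylinders hs ht,
      fun s t hs ht => sdiff_mem_measurableCylinders hs ht⟩
    ⟨{Set.univ}, Set.countable_singleton _,
      Set.singleton_subset_iff.2 (univ_mem_measurableCylinders _), by simp⟩
    generateFrom_measurableCylinders.symm hH (ENNReal.ofReal_pos.2 hε)
  have hFm : MeasurableSet F := MeasurableSet.of_mem_measurableCylinders hF
  obtain ⟨s, B, -, rfl⟩ := (mem_measurableCylinders F).1 hF
  have hle := h (s.sup id + 1) _ hFm fun f g hfg => by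
    rw [mem_cylinder, mem_cylinder]
    have : s.restrict f = s.restrict g := by
      funext k
      exact hfg k (Nat.lt_succ_of_le (Finset.le_sup (f := id) k.2))
    rw [this]
  set F : Set (ℕ → α) := cylinder (α := fun _ : ℕ => α) s B
  have hsd : ν.real (symmDiff F H) < ε := by
    rw [Measure.real, ← ENNReal.toReal_ofReal hε.le]
    exact (ENNReal.toReal_lt_toReal (measure_ne_top _ _) ENNReal.ofReal_ne_top).2 hFH
  have h1 : ν.real H ≤ ν.real (F ∩ H) + ν.real (symmDiff F H) :=
    (measureReal_mono (by
      intro f hf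
      by_cases hfF : f ∈ F
      · exact .inl ⟨hfF, hf⟩
      · exact .inr (.inr ⟨hf, hfF⟩))).trans (measureReal_union_le _ _)
  have h2 : ν.real F ≤ ν.real H + ν.real (symmDiff F H) :=
    (measureReal_mono (by
      intro f hf
      by_cases hfF : f ∈ H
      · exact .inl hfF
      · exact .inr (.inl ⟨hf, hfF⟩))).trans (measureReal_union_le _ _)
  have h3 : q * ν.real F ≤ q * (ν.real H + ε) := by gcongr; linarith
  have h4 : q * ε ≤ ε := by nlinarith
  have h5 : ε * 4 = (1 - q) * ν.real H := by simp only [ε]; ring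
  nlinarith

/-- Strong law of large numbers along disjoint blocks of length `m`. -/
lemma strong_law_blocks [Nonempty α] {m : ℕ} {W : (ℕ → α) → ℝ} (hW : Measurable W)
    (hdep : ∀ f g : ℕ → α, (∀ k < m, f k = g k) → W f = W g)
    (hint : Integrable W (Measure.infinitePi fun _ : ℕ => P)) :
    ∀ᵐ f ∂(Measure.infinitePi fun _ : ℕ => P),
      Tendsto (fun n : ℕ => (∑ j ∈ Finset.range n, W fun k => f (k + j * m)) / n) atTop
        (𝓝 (∫ f, W f ∂(Measure.infinitePi fun _ : ℕ => P))) := by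
  set ν := Measure.infinitePi fun _ : ℕ => P
  have hX0 : (fun f : ℕ → α => W fun k => f (k + 0 * m)) = W := by simp
  have key := strong_law_ae_real (μ := ν) (fun j f => W fun k => f (k + j * m))
    (by simpa using hint) ?_ ?_
  · simpa using key
  · classical
    obtain ⟨a⟩ := ‹Nonempty α›
    have hcoord : iIndepFun (fun (k : ℕ) (f : ℕ → α) => f k) ν :=
      iIndepFun_infinitePi (X := fun _ x => x) fun _ => measurable_id
    let ψ (j : ℕ) (g : Finset.Ico (j * m) (j * m + m) → α) : ℝ :=
      W fun k => if hk : k + j * m ∈ Finset.Ico (j * m) (j * m + m) then g ⟨_, hk⟩ else a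
    have hψ (j : ℕ) : Measurable (ψ j) := by
      refine hW.comp (measurable_pi_iff.2 fun k => ?_)
      by_cases hk : k + j * m ∈ Finset.Ico (j * m) (j * m + m)
      · simp only [hk, dite_true]; exact measurable_pi_apply _
      · simp only [hk, dite_false]; exact measurable_const
    have hWψ (j : ℕ) : (fun f : ℕ → α => W fun k => f (k + j * m)) =
        ψ j ∘ fun f (i : Finset.Ico (j * m) (j * m + m)) => f i := by
      funext f
      refine hdep _ _ fun k hk => ?_
      have : k + j * m ∈ Finset.Ico (j * m) (j * m + m) := by simp; omega
      simp only [this, dite_true]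
    intro i j hij
    simp only [Function.onFun]
    rw [hWψ i, hWψ j]
    refine (hcoord.indepFun_finset _ _ ?_ fun k => measurable_pi_apply k).comp (hψ i) (hψ j)
    rw [Finset.disjoint_left]
    intro k hk hk'
    simp only [Finset.mem_Ico] at hk hk'
    have h1 : i * m < (j + 1) * m := by nlinarith
    have h2 : j * m < (i + 1) * m := by nlinarith
    have h3 := lt_of_mul_lt_mul_right h1 (Nat.zero_le m)
    have h4 := lt_of_mul_lt_mul_right h2 (Nat.zero_le m)
    omega
  · intro j
    rw [hX0]
    have hmp : MeasurePreserving (fun (f : ℕ → α) k => f (k + j * m)) ν ν :=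
      measurePreserving_shift P (j * m)
    refine ⟨(hW.comp hmp.measurable).aemeasurable, hW.aemeasurable, ?_⟩
    conv_rhs => rw [← hmp.map_eq, Measure.map_map hW hmp.measurable]
    rfl

lemma integral_shift_infinitePi {W : (ℕ → α) → ℝ} (hW : Measurable W) (n : ℕ) :
    ∫ f, W (fun k => f (k + n)) ∂(Measure.infinitePi fun _ : ℕ => P) =
      ∫ f, W f ∂(Measure.infinitePi fun _ : ℕ => P) := by
  have hmp := measurePreserving_shift P n
  conv_rhs => rw [← hmp.map_eq, integral_map hmp.measurable.aemeasurable
    hW.aestronglyMeasurable]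

lemma integrable_eval_infinitePi {u : α → ℝ} (hu : Integrable u P) (k : ℕ) :
    Integrable (fun f : ℕ → α => u (f k)) (Measure.infinitePi fun _ : ℕ => P) :=
  (measurePreserving_eval_infinitePi (fun _ : ℕ => P) k).integrable_comp_of_integrable hu

lemma integral_eval_infinitePi {u : α → ℝ} (hu : Measurable u) (k : ℕ) :
    ∫ f, u (f k) ∂(Measure.infinitePi fun _ : ℕ => P) = ∫ x, u x ∂P := by
  have hmp := measurePreserving_eval_infinitePi (fun _ : ℕ => P) k
  conv_rhs => rw [← hmp.map_eq, integral_map hmp.measurable.aemeasurable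
    hu.aestronglyMeasurable]

lemma ae_forall_eval_infinitePi {p : α → Prop} (hp : ∀ᵐ x ∂P, p x) :
    ∀ᵐ f ∂(Measure.infinitePi fun _ : ℕ => P), ∀ k, p (f k) :=
  ae_all_iff.2 fun k =>
    (measurePreserving_eval_infinitePi (fun _ : ℕ => P) k).quasiMeasurePreserving.ae hp

end Sequences

section Measurability

variable {d : ℕ}

lemma measurable_lvec (n : ℕ) (i : Fin d) :
    Measurable fun f : ℕ → Fin d → Fin d → EReal => lvec n f i := by
  induction n generalizing i with
  | zero => exact measurable_const
  | succ n ih =>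
    simp only [lvec_succ, mpVec]
    refine Measurable.iSup fun j => Measurable.add (by fun_prop) ?_
    exact (ih j).comp (by fun_prop : Measurable fun (f : ℕ → Fin d → Fin d → EReal) k => f (k + 1))

lemma measurable_setMax (n : ℕ) (S : Finset (Fin d)) :
    Measurable fun f : ℕ → Fin d → Fin d → EReal => setMax n f S := by
  simp only [setMax, Finset.sup_eq_iSup]
  exact Measurable.iSup fun i => Measurable.iSup fun _ => measurable_lvec n i

lemma measurable_posMax : Measurable (posMax (d := d)) := by
  unfold posMax
  exact ((Measurable.iSup fun i => Measurable.iSup fun j => by fun_prop).sup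
    measurable_const).ereal_toReal

lemma measurableSet_growsFrom (c : ℝ) (S : Finset (Fin d)) :
    MeasurableSet (growsFrom c S) := by
  have : growsFrom c S = ⋃ K : ℕ, ⋂ n : ℕ, {f | ((c * n - K : ℝ) : EReal) ≤ setMax n f S} := by
    ext f; simp [growsFrom]
  rw [this]
  exact .iUnion fun K => .iInter fun n => measurableSet_le measurable_const (measurable_setMax n S)

lemma measurableSet_fastSet (Z : Set (Finset (Fin d))) (c : ℝ) (L : ℕ) :
    MeasurableSet (fastSet Z c L) := by
  have : fastSet Z c L = ⋃ S ∈ Z, ⋂ m : ℕ, ⋂ (_ : 1 ≤ m), ⋂ (_ : m ≤ L),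
      {f | ((c * m : ℝ) : EReal) ≤ setMax m f S} := by
    ext f; simp [fastSet]
  rw [this]
  exact .biUnion Z.to_countable fun S _ => .iInter fun m => .iInter fun _ => .iInter fun _ =>
    measurableSet_le measurable_const (measurable_setMax m S)

end Measurability

section Lower

variable {d : ℕ} {P : Measure (Fin d → Fin d → EReal)}

lemma measure_growsFrom_succSet_le (c : ℝ) (S : Finset (Fin d)) (M : Fin d → Fin d → EReal) :
    (Measure.infinitePi fun _ : ℕ => P) (growsFrom c (succSet M S)) ≤
      (Measure.infinitePi fun _ : ℕ => P) {f | seqCons M f ∈ growsFrom c S} :=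
  measure_mono fun f hf => growsFrom_of_shift (f := seqCons M f) hf

variable [IsProbabilityMeasure P]

/-- If the growth probability is minimal at `S`, it is a.s. no larger at the successors of `S`. -/
lemma ae_measure_growsFrom_succSet_le (hrow : ∀ᵐ M ∂P, ∀ i, ∃ j, M i j ≠ ⊥) {c : ℝ}
    {S : Finset (Fin d)} (hS : S.Nonempty)
    (hmin : ∀ T : Finset (Fin d), T.Nonempty → (Measure.infinitePi fun _ : ℕ => P) (growsFrom c S) ≤
      (Measure.infinitePi fun _ : ℕ => P) (growsFrom c T)) :
    ∀ᵐ M ∂P, (succSet M S).Nonempty ∧ (Measure.infinitePi fun _ : ℕ => P)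
      (growsFrom c (succSet M S)) ≤ (Measure.infinitePi fun _ : ℕ => P) (growsFrom c S) := by
  set ν := Measure.infinitePi fun _ : ℕ => P with hν
  have hne : ∀ᵐ M ∂P, (succSet M S).Nonempty := by
    filter_upwards [hrow] with M hM
    obtain ⟨i, hi⟩ := hS
    obtain ⟨j, hj⟩ := hM i
    exact ⟨j, mem_succSet.2 ⟨i, hi, hj⟩⟩
  have hle : ∀ᵐ M ∂P, ν (growsFrom c S) ≤ ν {f | seqCons M f ∈ growsFrom c S} := by
    filter_upwards [hne] with M hM
    exact (hmin _ hM).trans (measure_growsFrom_succSet_le c S M)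
  have hmeas : Measurable fun M => ν {f | seqCons M f ∈ growsFrom c S} :=
    measurable_measure_prodMk_left (measurable_seqCons (measurableSet_growsFrom c S))
  have heq := ae_eq_of_ae_le_of_lintegral_le hle (by simp) hmeas.aemeasurable (by
    rw [← infinitePi_apply_eq_lintegral_seqCons P (measurableSet_growsFrom c S)]; simp [hν])
  filter_upwards [hne, heq] with M hM hM'
  exact ⟨hM, (measure_growsFrom_succSet_le c S M).trans hM'.ge⟩

/-- A uniform positive lower bound on growth probabilities forces almost sure growth. -/
lemma ae_mem_growsFrom_of_pos (hrow : ∀ᵐ M ∂P, ∀ i, ∃ j, M i j ≠ ⊥) {c : ℝ} {p : ENNReal}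
    (hp : p ≠ 0) (hmin : ∀ T : Finset (Fin d), T.Nonempty →
      p ≤ (Measure.infinitePi fun _ : ℕ => P) (growsFrom c T))
    {S : Finset (Fin d)} (hS : S.Nonempty) :
    ∀ᵐ f ∂(Measure.infinitePi fun _ : ℕ => P), f ∈ growsFrom c S := by
  set ν := Measure.infinitePi fun _ : ℕ => P
  have hp1 : p ≤ 1 := (hmin S hS).trans prob_le_one
  have key (K : ℕ) : ∀ S : Finset (Fin d), S.Nonempty → ∀ F : Set (ℕ → Fin d → Fin d → EReal),
      MeasurableSet F → (∀ f g, (∀ k < K, f k = g k) → (f ∈ F ↔ g ∈ F)) →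
      ν (F ∩ (growsFrom c S)ᶜ) ≤ (1 - p) * ν F := by
    induction K with
    | zero =>
      intro S hS F hF hdep
      rcases F.eq_empty_or_nonempty with rfl | ⟨f, hf⟩
      · simp
      · have : F = Set.univ := Set.eq_univ_of_forall fun g => (hdep f g (by simp)).1 hf
        rw [this, Set.univ_inter, prob_compl_eq_one_sub (measurableSet_growsFrom c S), measure_univ,
          mul_one]
        exact tsub_le_tsub_left (hmin S hS) 1
    | succ K ih =>
      intro S hS F hF hdep
      rw [infinitePi_apply_eq_lintegral_seqCons P (hF.inter (measurableSet_growsFrom c S).compl),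
        infinitePi_apply_eq_lintegral_seqCons P hF,
        ← lintegral_const_mul' _ _ (by finiteness)]
      refine lintegral_mono_ae ?_
      filter_upwards [hrow] with M hM
      have hne : (succSet M S).Nonempty := by
        obtain ⟨i, hi⟩ := hS
        obtain ⟨j, hj⟩ := hM i
        exact ⟨j, mem_succSet.2 ⟨i, hi, hj⟩⟩
      have hFM : MeasurableSet {f | seqCons M f ∈ F} :=
        (measurable_seqCons.comp measurable_prodMk_left) hF
      refine le_trans (measure_mono ?_) (ih (succSet M S) hne {f | seqCons M f ∈ F} hFM ?_)
      · exact fun f hf => ⟨hf.1, fun h => hf.2 (growsFrom_of_shift (f := seqCons M f) h)⟩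
      · intro f g hfg
        refine hdep _ _ fun k hk => ?_
        cases k with
        | zero => rfl
        | succ k => exact hfg k (by omega)
  have hp' : 0 < p.toReal := ENNReal.toReal_pos hp (ne_top_of_le_ne_top ENNReal.one_ne_top hp1)
  have hp1' : p.toReal ≤ 1 := by simpa using ENNReal.toReal_mono ENNReal.one_ne_top hp1
  refine measure_eq_zero_of_forall_cylinder_le P (q := 1 - p.toReal) (by linarith) (by linarith)
    (measurableSet_growsFrom c S).compl fun K F hF hdep => ?_
  have := ENNReal.toReal_mono (by finiteness) (key K S hS F hF hdep)
  rwa [ENNReal.toReal_mul, ENNReal.toReal_sub_of_le hp1 ENNReal.one_ne_top,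
    ENNReal.toReal_one] at this

/-- A family of sets stable under successors, containing all nodes, from which growth at rate
`c` almost surely fails, is incompatible with a larger asymptotic rate in probability. -/
lemma false_of_stable_family [NeZero d] (htop : ∀ᵐ M ∂P, ∀ i j, M i j ≠ ⊤)
    (hint : Integrable posMax P) {c c' : ℝ} (hcc : c < c')
    (hlim : Tendsto (fun n : ℕ => (Measure.infinitePi fun _ : ℕ => P).real
      {f | ((c' * n : ℝ) : EReal) ≤ setMax n f Finset.univ}) atTop (𝓝 1))
    {Z : Set (Finset (Fin d))} (hZne : ∀ S ∈ Z, S.Nonempty) (hZi : ∀ i, {i} ∈ Z)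
    (hZ : ∀ᵐ M ∂P, ∀ S ∈ Z, succSet M S ∈ Z)
    (hZ0 : ∀ S ∈ Z, (Measure.infinitePi fun _ : ℕ => P) (growsFrom c S) = 0) : False := by
  classical
  set ν := Measure.infinitePi fun _ : ℕ => P with hν
  set u : (Fin d → Fin d → EReal) → ℝ := fun M => posMax M + |c| with hu
  have hum : Measurable u := measurable_posMax.add_const _
  have hui : Integrable u P := hint.add (integrable_const _)
  have hu0 (M) : 0 ≤ u M := add_nonneg (posMax_nonneg M) (abs_nonneg c)
  set V : ℕ → (ℕ → Fin d → Fin d → EReal) → ℝ :=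
    fun L => (fastSet Z c L).indicator fun f => u (f 0) with hV
  have hVm (L : ℕ) : Measurable (V L) :=
    (hum.comp (measurable_pi_apply 0)).indicator (measurableSet_fastSet Z c L)
  have hVi (L : ℕ) : Integrable (V L) ν :=
    (integrable_eval_infinitePi P hui 0).indicator (measurableSet_fastSet Z c L)
  have hV0 (L : ℕ) (f) : 0 ≤ V L f := Set.indicator_nonneg (fun f _ => hu0 (f 0)) f
  have hVlim : Tendsto (fun L => ∫ f, V L f ∂ν) atTop (𝓝 0) := by
    refine tendsto_integral_indicator_zero (integrable_eval_infinitePi P hui 0)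
      (fun L => measurableSet_fastSet Z c L) ?_
    have hbad : ∀ᵐ f ∂ν, ∀ S ∈ Z, f ∉ growsFrom c S :=
      (ae_ball_iff Z.to_countable).2 fun S hS => measure_eq_zero_iff_ae_notMem.1 (hZ0 S hS)
    filter_upwards [hbad] with f hf
    have (S : Finset (Fin d)) : ∃ m : ℕ, S ∈ Z →
        1 ≤ m ∧ setMax m f S < ((c * m : ℝ) : EReal) := by
      by_cases hS : S ∈ Z
      · obtain ⟨m, hm⟩ := exists_setMax_lt_of_notMem_growsFrom (hZne S hS) (hf S hS)
        exact ⟨m, fun _ => hm⟩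
      · exact ⟨0, fun h => absurd h hS⟩
    choose m hm using this
    filter_upwards [eventually_ge_atTop (Finset.univ.sup m)] with L hL
    rintro ⟨S, hS, hSL⟩
    exact absurd (hSL (m S) (hm S hS).1 ((Finset.le_sup (Finset.mem_univ S)).trans hL))
      (not_le.2 (hm S hS).2)
  have hδ : 0 < c' - c := sub_pos.2 hcc
  obtain ⟨L, hL⟩ := (hVlim.eventually (gt_mem_nhds (by positivity : 0 < (c' - c) / 4))).exists
  set I := ∫ M, u M ∂P
  have hI : 0 ≤ I := integral_nonneg hu0
  have hbound (n : ℕ) (hn : 0 < n) :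
      ν.real {f | ((c' * n : ℝ) : EReal) ≤ setMax n f Finset.univ} ≤
        1 / 4 + L * I / (c' - c) / n := by
    set J := (Finset.range n).filter fun k => n ≤ k + L
    set T : (ℕ → Fin d → Fin d → EReal) → ℝ := fun f =>
      ∑ k ∈ Finset.range n, V L (fun l => f (l + k)) + ∑ k ∈ J, u (f k) with hT
    have hi1 (k : ℕ) : Integrable (fun f => V L (fun l => f (l + k))) ν :=
      (measurePreserving_shift P k).integrable_comp_of_integrable (hVi L)
    have hi2 (k : ℕ) : Integrable (fun f => u (f k)) ν := integrable_eval_infinitePi P hui k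
    have hTi : Integrable T ν :=
      (integrable_finsetSum _ fun k _ => hi1 k).add (integrable_finsetSum _ fun k _ => hi2 k)
    have hT0 (f) : 0 ≤ T f :=
      add_nonneg (Finset.sum_nonneg fun k _ => hV0 L _) (Finset.sum_nonneg fun k _ => hu0 _)
    have hJ : J.card ≤ L := by
      have : J ⊆ Finset.Ico (n - L) n := fun k hk => by
        simp only [J, Finset.mem_filter, Finset.mem_range] at hk
        simp only [Finset.mem_Ico]; omega
      refine (Finset.card_le_card this).trans ?_
      simp; omega
    have hTint : ∫ f, T f ∂ν ≤ n * ((c' - c) / 4) + L * I := by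
      rw [hT, integral_add (integrable_finsetSum _ fun k _ => hi1 k)
        (integrable_finsetSum _ fun k _ => hi2 k), integral_finsetSum _ fun k _ => hi1 k,
        integral_finsetSum _ fun k _ => hi2 k]
      simp only [hν, integral_shift_infinitePi P (hVm L), integral_eval_infinitePi P hum,
        Finset.sum_const, Finset.card_range, nsmul_eq_mul]
      gcongr
    have hsub : ν.real {f | ((c' * n : ℝ) : EReal) ≤ setMax n f Finset.univ} ≤
        ν.real {f | (c' - c) * n ≤ T f} := by
      refine ENNReal.toReal_mono (by finiteness) (measure_mono_ae ?_)
      filter_upwards [ae_forall_eval_infinitePi P htop, ae_forall_eval_infinitePi P hZ]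
        with f hf1 hf2 hf
      have hle : setMax n f Finset.univ ≤ ((c * n + T f : ℝ) : EReal) := by
        refine Finset.sup_le fun i _ => ?_
        have h1 := setMax_le_of_cover (c := c) (L := L) n hf1 hf2 (hZi i)
        rw [setMax, Finset.sup_singleton] at h1
        refine h1.trans (EReal.coe_le_coe_iff.2 (add_le_add le_rfl ?_))
        rw [hT]
        simp only [J]
        rw [Finset.sum_filter, ← Finset.sum_add_distrib]
        refine Finset.sum_le_sum fun k _ => ?_
        have hk := hu0 (f k)
        by_cases h1 : (fun l => f (l + k)) ∈ fastSet Z c L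
        · have : V L (fun l => f (l + k)) = u (f k) := by simp [hV, h1]
          rw [this, if_pos (.inl h1)]
          split_ifs <;> simp only [hu] at hk ⊢ <;> linarith
        · simp only [h1, false_or]
          exact le_add_of_nonneg_left (hV0 L _)
      have := EReal.coe_le_coe_iff.1 (le_trans hf hle)
      change (c' - c) * n ≤ T f
      linarith
    have hmarkov := mul_meas_ge_le_integral_of_nonneg (.of_forall hT0) hTi ((c' - c) * n)
    have hn' : (0 : ℝ) < n := by exact_mod_cast hn
    refine hsub.trans ?_
    have h4 : 1 / 4 + L * I / (c' - c) / n = (n * ((c' - c) / 4) + L * I) / ((c' - c) * n) := by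
      field_simp
    rw [h4, le_div_iff₀ (by positivity), mul_comm]
    exact hmarkov.trans hTint
  have hlim2 : Tendsto (fun n : ℕ => 1 / 4 + L * I / (c' - c) / (n : ℝ)) atTop (𝓝 (1 / 4 + 0)) :=
    tendsto_const_nhds.add (tendsto_const_div_atTop_nhds_zero_nat _)
  have := le_of_tendsto_of_tendsto hlim hlim2 (by
    filter_upwards [eventually_gt_atTop 0] with n hn using hbound n hn)
  norm_num at this

/-- Growth at every rate below the asymptotic rate in probability, from every node. -/
lemma ae_mem_growsFrom_singleton (htop : ∀ᵐ M ∂P, ∀ i j, M i j ≠ ⊤)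
    (hrow : ∀ᵐ M ∂P, ∀ i, ∃ j, M i j ≠ ⊥) (hint : Integrable posMax P)
    (hsc : ∀ i j : Fin d, Relation.ReflTransGen (arcRel P fun M => M) i j)
    {c c' : ℝ} (hcc : c < c')
    (hlim : Tendsto (fun n : ℕ => (Measure.infinitePi fun _ : ℕ => P).real
      {f | ((c' * n : ℝ) : EReal) ≤ setMax n f Finset.univ}) atTop (𝓝 1)) (i : Fin d) :
    ∀ᵐ f ∂(Measure.infinitePi fun _ : ℕ => P), f ∈ growsFrom c {i} := by
  have : NeZero d := ⟨by rintro rfl; exact i.elim0⟩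
  set ν := Measure.infinitePi fun _ : ℕ => P with hν
  obtain ⟨i₀, hi₀⟩ := Finite.exists_min fun i : Fin d => ν (growsFrom c {i})
  have hmin (T : Finset (Fin d)) (hT : T.Nonempty) :
      ν (growsFrom c {i₀}) ≤ ν (growsFrom c T) := by
    obtain ⟨j, hj⟩ := hT
    exact (hi₀ j).trans (measure_mono (growsFrom_mono c (Finset.singleton_subset_iff.2 hj)))
  have hconst (j : Fin d) : ν (growsFrom c {j}) ≤ ν (growsFrom c {i₀}) := by
    induction hsc i₀ j with
    | refl => exact le_rfl
    | @tail a b _ harc ih =>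
      have hae := ae_measure_growsFrom_succSet_le hrow (c := c) (Finset.singleton_nonempty a)
        fun T hT => ih.trans (hmin T hT)
      obtain ⟨M, hM, hMle⟩ := ((frequently_ae_iff.2 harc).and_eventually hae).exists
      refine le_trans (measure_mono (growsFrom_mono c (Finset.singleton_subset_iff.2 ?_)))
        (hMle.2.trans ih)
      exact mem_succSet.2 ⟨a, Finset.mem_singleton_self a, hM⟩
  by_cases h0 : ν (growsFrom c {i₀}) = 0
  · refine (false_of_stable_family htop hint hcc hlim
      (Z := {S | S.Nonempty ∧ ν (growsFrom c S) = 0}) (fun S hS => hS.1)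
      (fun j => ⟨Finset.singleton_nonempty j, le_antisymm ((hconst j).trans h0.le) bot_le⟩)
      ?_ fun S hS => hS.2).elim
    refine (ae_ball_iff (Set.to_countable _)).2 fun S hS => ?_
    filter_upwards [ae_measure_growsFrom_succSet_le hrow (c := c) hS.1
      fun T _ => hS.2.le.trans bot_le] with M hM
    exact ⟨hM.1, le_antisymm (hM.2.trans hS.2.le) bot_le⟩
  · exact ae_mem_growsFrom_of_pos hrow h0 hmin (Finset.singleton_nonempty i)

end Lower

section Upper

variable {d : ℕ}

open Classical in
/-- Bound on the excess over rate `c` of the path weights of length `m`, zero if there is none. -/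
def blockExcess (c : ℝ) (m : ℕ) (f : ℕ → Fin d → Fin d → EReal) : ℝ :=
  if ((c * m : ℝ) : EReal) < setMax m f Finset.univ then
    ∑ k ∈ Finset.range m, (posMax (f k) + |c|) else 0

lemma setMax_univ_le_blocks (c : ℝ) (m q r : ℕ) {f : ℕ → Fin d → Fin d → EReal}
    (hf : ∀ k i j, f k i j ≠ ⊤) :
    setMax (q * m + r) f Finset.univ ≤ ((c * (q * m + r : ℕ) +
      ∑ j ∈ Finset.range q, blockExcess c m (fun k => f (k + j * m)) +
        ∑ k ∈ Finset.range r, (posMax (f (k + q * m)) + |c|) : ℝ) : EReal) := by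
  have base (n : ℕ) (f : ℕ → Fin d → Fin d → EReal) (hf : ∀ k i j, f k i j ≠ ⊤) :
      setMax n f Finset.univ ≤
        ((c * n + ∑ k ∈ Finset.range n, (posMax (f k) + |c|) : ℝ) : EReal) := by
    refine (setMax_le_sum hf n _).trans (EReal.coe_le_coe_iff.2 ?_)
    rw [Finset.sum_add_distrib, Finset.sum_const, Finset.card_range, nsmul_eq_mul]
    nlinarith [neg_abs_le c, (Nat.cast_nonneg n : (0 : ℝ) ≤ n)]
  induction q generalizing f with
  | zero => simpa using base r f hf
  | succ q ih =>
    rw [show (q + 1) * m + r = m + (q * m + r) by ring]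
    refine (setMax_add_le m _ f _).trans ((add_le_add (?_ : _ ≤ ((c * m + blockExcess c m f : ℝ) :
      EReal)) ((setMax_mono _ _ (Finset.subset_univ _)).trans
        (ih (f := fun k => f (k + m)) fun k => hf _))).trans ?_)
    · rw [blockExcess]
      split_ifs with h
      · exact base m f hf
      · simpa using h
    · rw [← EReal.coe_add, EReal.coe_le_coe_iff, Finset.sum_range_succ']
      simp only [add_mul, one_mul, zero_mul, add_zero, add_assoc]
      push_cast
      linarith

lemma blockExcess_congr (c : ℝ) {m : ℕ} {f g : ℕ → Fin d → Fin d → EReal}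
    (h : ∀ k < m, f k = g k) : blockExcess c m f = blockExcess c m g := by
  have h1 : setMax m f Finset.univ = setMax m g Finset.univ := by
    simp only [setMax, lvec, appProd_congr h]
  have h2 : ∑ k ∈ Finset.range m, (posMax (f k) + |c|) =
      ∑ k ∈ Finset.range m, (posMax (g k) + |c|) :=
    Finset.sum_congr rfl fun k hk => by rw [h k (Finset.mem_range.1 hk)]
  simp only [blockExcess, h1, h2]

lemma measurableSet_setMax_gt (c : ℝ) (m : ℕ) : MeasurableSet
    {f : ℕ → Fin d → Fin d → EReal | ((c * m : ℝ) : EReal) < setMax m f Finset.univ} :=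
  measurableSet_lt measurable_const (measurable_setMax m _)

lemma measurable_sum_posMax_add (c : ℝ) (m : ℕ) :
    Measurable fun f : ℕ → Fin d → Fin d → EReal =>
      ∑ k ∈ Finset.range m, (posMax (f k) + |c|) :=
  Finset.measurable_fun_sum _ fun k _ =>
    (measurable_posMax.comp (measurable_pi_apply k)).add_const _

lemma measurable_blockExcess (c : ℝ) (m : ℕ) : Measurable (blockExcess (d := d) c m) := by
  unfold blockExcess
  exact Measurable.ite (measurableSet_setMax_gt c m) (measurable_sum_posMax_add c m)
    measurable_const

variable {P : Measure (Fin d → Fin d → EReal)} [IsProbabilityMeasure P]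

lemma integrable_sum_posMax_add (hint : Integrable posMax P) (c : ℝ) (m : ℕ) :
    Integrable (fun f : ℕ → Fin d → Fin d → EReal =>
      ∑ k ∈ Finset.range m, (posMax (f k) + |c|)) (Measure.infinitePi fun _ : ℕ => P) :=
  integrable_finsetSum _ fun k _ =>
    (integrable_eval_infinitePi P hint k).add (integrable_const _)

lemma integrable_blockExcess (hint : Integrable posMax P) (c : ℝ) (m : ℕ) :
    Integrable (blockExcess c m) (Measure.infinitePi fun _ : ℕ => P) := by
  refine (integrable_sum_posMax_add hint c m).mono
    (measurable_blockExcess c m).aestronglyMeasurable (.of_forall fun f => ?_)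
  rw [blockExcess]
  split_ifs
  · exact le_rfl
  · simp

/-- If the rate `c` is exceeded with vanishing probability, then the mean excess over long blocks
is small compared with their length. -/
lemma exists_integral_blockExcess_le (hint : Integrable posMax P) {c δ : ℝ} (hδ : 0 < δ)
    (hlim : Tendsto (fun n : ℕ => (Measure.infinitePi fun _ : ℕ => P).real
      {f | ((c * n : ℝ) : EReal) < setMax n f Finset.univ}) atTop (𝓝 0)) :
    ∃ m : ℕ, 0 < m ∧
      ∫ f, blockExcess c m f ∂(Measure.infinitePi fun _ : ℕ => P) ≤ m * (δ / 2) := by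
  set ν := Measure.infinitePi fun _ : ℕ => P with hν
  set u : (Fin d → Fin d → EReal) → ℝ := fun M => posMax M + |c| with hu
  have hum : Measurable u := measurable_posMax.add_const _
  have hui : Integrable u P := hint.add (integrable_const _)
  have hu0 (M) : 0 ≤ u M := add_nonneg (posMax_nonneg M) (abs_nonneg c)
  have hsm (K : ℕ) : MeasurableSet {M | (K : ℝ) < u M} := measurableSet_lt measurable_const hum
  have htail := tendsto_integral_indicator_zero hui (s := fun K : ℕ => {M | (K : ℝ) < u M}) hsm
    (.of_forall fun M => by
      obtain ⟨N, hN⟩ := exists_nat_ge (u M)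
      filter_upwards [eventually_ge_atTop N] with n hn
      have : (N : ℝ) ≤ n := by exact_mod_cast hn
      simpa using hN.trans this)
  obtain ⟨K, hK⟩ := (htail.eventually (gt_mem_nhds (show 0 < δ / 4 by positivity))).exists
  obtain ⟨m, hmK, hm⟩ := (((hlim.const_mul (K : ℝ)).eventually
    (gt_mem_nhds (show (K : ℝ) * 0 < δ / 4 by simpa using hδ))).and (eventually_gt_atTop 0)).exists
  refine ⟨m, hm, ?_⟩
  set E : Set (ℕ → Fin d → Fin d → EReal) :=
    {f | ((c * m : ℝ) : EReal) < setMax m f Finset.univ} with hE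
  have hEm : MeasurableSet E := measurableSet_setMax_gt c m
  have hle (f : ℕ → Fin d → Fin d → EReal) : blockExcess c m f ≤ ∑ k ∈ Finset.range m,
      (E.indicator (fun _ => (K : ℝ)) f + {M | (K : ℝ) < u M}.indicator u (f k)) := by
    rw [blockExcess]
    split_ifs with h
    · refine Finset.sum_le_sum fun k _ => ?_
      rw [Set.indicator_of_mem (show f ∈ E from h)]
      by_cases h' : (K : ℝ) < u (f k)
      · rw [Set.indicator_of_mem (show f k ∈ {M | (K : ℝ) < u M} from h')]
        exact le_add_of_nonneg_left (Nat.cast_nonneg K)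
      · rw [Set.indicator_of_notMem (show f k ∉ {M | (K : ℝ) < u M} from h'), add_zero]
        exact not_lt.1 h'
    · exact Finset.sum_nonneg fun k _ => add_nonneg
        (Set.indicator_nonneg (fun _ _ => Nat.cast_nonneg K) _)
        (Set.indicator_nonneg (fun M _ => hu0 M) _)
  have hi1 : Integrable (E.indicator fun _ => (K : ℝ)) ν := (integrable_const _).indicator hEm
  have hi2 (k : ℕ) : Integrable (fun f : ℕ → Fin d → Fin d → EReal =>
      {M | (K : ℝ) < u M}.indicator u (f k)) ν :=
    integrable_eval_infinitePi P (hui.indicator (hsm K)) k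
  refine (integral_mono (integrable_blockExcess hint c m)
    (integrable_finsetSum _ fun k _ => hi1.add (hi2 k)) hle).trans ?_
  rw [integral_finsetSum _ fun k _ => hi1.add (hi2 k)]
  have hk (k : ℕ) : ∫ f, (E.indicator (fun _ => (K : ℝ)) f +
      {M | (K : ℝ) < u M}.indicator u (f k)) ∂ν ≤ δ / 2 := by
    rw [integral_add hi1 (hi2 k), integral_indicator_const _ hEm, smul_eq_mul,
      integral_eval_infinitePi P (hum.indicator (hsm K)) k]
    rw [mul_comm] at hmK
    linarith
  refine (Finset.sum_le_sum fun k _ => hk k).trans ?_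
  simp

/-- A rate exceeded with vanishing probability is an almost sure asymptotic upper bound. -/
lemma ae_eventually_setMax_univ_le (htop : ∀ᵐ M ∂P, ∀ i j, M i j ≠ ⊤)
    (hint : Integrable posMax P) {c c' : ℝ} (hcc : c' < c)
    (hlim : Tendsto (fun n : ℕ => (Measure.infinitePi fun _ : ℕ => P).real
      {f | ((c' * n : ℝ) : EReal) < setMax n f Finset.univ}) atTop (𝓝 0)) :
    ∀ᵐ f ∂(Measure.infinitePi fun _ : ℕ => P), ∀ᶠ n : ℕ in atTop,
      setMax n f Finset.univ ≤ ((c * n : ℝ) : EReal) := by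
  have hδ : 0 < c - c' := sub_pos.2 hcc
  obtain ⟨m, hm, hmint⟩ := exists_integral_blockExcess_le hint hδ hlim
  have hm' : (0 : ℝ) < m := by exact_mod_cast hm
  filter_upwards [ae_forall_eval_infinitePi P htop,
    strong_law_blocks P (measurable_blockExcess c' m) (fun f g => blockExcess_congr c')
      (integrable_blockExcess hint c' m),
    strong_law_blocks P (m := m) (measurable_sum_posMax_add c' m)
      (fun f g h => Finset.sum_congr rfl fun k hk => by rw [h k (Finset.mem_range.1 hk)])
      (integrable_sum_posMax_add hint c' m)] with f hf hW hR
  set W : ℕ → ℝ := fun j => blockExcess c' m fun k => f (k + j * m)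
  set R : ℕ → ℝ := fun j => ∑ k ∈ Finset.range m, (posMax (f (k + j * m)) + |c'|)
  have hR0 : Tendsto (fun q : ℕ => R q / q) atTop (𝓝 0) := by
    have h1 := (tendsto_add_atTop_iff_nat 1).2 hR
    have h2 : Tendsto (fun q : ℕ => ((q : ℝ) + 1) / q) atTop (𝓝 1) := by
      have := (tendsto_const_nhds (x := (1 : ℝ))).add tendsto_one_div_atTop_nhds_zero_nat
      rw [add_zero] at this
      refine this.congr' ?_
      filter_upwards [eventually_gt_atTop 0] with q hq
      have : (q : ℝ) ≠ 0 := by positivity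
      field_simp
    have h3 := (h1.mul h2).sub hR
    rw [mul_one, sub_self] at h3
    refine h3.congr' ?_
    filter_upwards [eventually_gt_atTop 0] with q hq
    have : (q : ℝ) ≠ 0 := by positivity
    have : (q : ℝ) + 1 ≠ 0 := by positivity
    rw [Finset.sum_range_succ]
    push_cast
    field_simp
    ring
  have hsum := hW.add hR0
  rw [add_zero] at hsum
  have hlt : ∫ f, blockExcess c' m f ∂(Measure.infinitePi fun _ : ℕ => P) < m * (c - c') :=
    hmint.trans_lt (by nlinarith [mul_pos hm' hδ])
  have hq : Tendsto (fun n : ℕ => n / m) atTop atTop := Nat.tendsto_div_const_atTop hm.ne'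
  filter_upwards [hq.eventually (hsum.eventually (gt_mem_nhds hlt)),
    hq.eventually (eventually_gt_atTop 0)] with n hn hn0
  have hq0 : (0 : ℝ) < (n / m : ℕ) := by exact_mod_cast hn0
  rw [← add_div, div_lt_iff₀ hq0] at hn
  have hdet := setMax_univ_le_blocks c' m (n / m) (n % m) hf
  rw [Nat.div_add_mod' n m] at hdet
  refine hdet.trans (EReal.coe_le_coe_iff.2 ?_)
  have hrem : ∑ k ∈ Finset.range (n % m), (posMax (f (k + n / m * m)) + |c'|) ≤ R (n / m) :=
    Finset.sum_le_sum_of_subset_of_nonneg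
      (Finset.range_subset_range.2 (Nat.mod_lt n hm).le)
      fun k _ _ => add_nonneg (posMax_nonneg _) (abs_nonneg _)
  have hqm : ((n / m : ℕ) : ℝ) * m ≤ n := by exact_mod_cast Nat.div_mul_le_self n m
  have : m * (c - c') * (n / m : ℕ) ≤ (c - c') * n := by nlinarith
  simp only [W] at hn
  linarith

end Upper

section Transfer

lemma mpScale_lt_iff {n : ℕ} (hn : 0 < n) (x : EReal) (c : ℝ) :
    mpScale n x < c ↔ x < ((c * n : ℝ) : EReal) := by
  have hn' : (0 : ℝ) < n := by exact_mod_cast hn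
  rw [mpScale]
  induction x with
  | bot =>
    rw [EReal.coe_mul_bot_of_pos (inv_pos.2 hn')]
    exact iff_of_true (EReal.bot_lt_coe _) (EReal.bot_lt_coe _)
  | top => simp [EReal.coe_mul_top_of_pos (inv_pos.2 hn')]
  | coe x => rw [← EReal.coe_mul, EReal.coe_lt_coe_iff, EReal.coe_lt_coe_iff,
      inv_mul_lt_iff₀ hn', mul_comm]

lemma lt_mpScale_iff {n : ℕ} (hn : 0 < n) (x : EReal) (c : ℝ) :
    (c : EReal) < mpScale n x ↔ ((c * n : ℝ) : EReal) < x := by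
  have hn' : (0 : ℝ) < n := by exact_mod_cast hn
  rw [mpScale]
  induction x with
  | bot => simp [EReal.coe_mul_bot_of_pos (inv_pos.2 hn')]
  | top =>
    rw [EReal.coe_mul_top_of_pos (inv_pos.2 hn')]
    exact iff_of_true (EReal.coe_lt_top _) (EReal.coe_lt_top _)
  | coe x => rw [← EReal.coe_mul, EReal.coe_lt_coe_iff, EReal.coe_lt_coe_iff,
      lt_inv_mul_iff₀ hn', mul_comm]

variable {d : ℕ}

lemma setMax_univ_eq_iSup (n : ℕ) (f : ℕ → Fin d → Fin d → EReal) :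
    setMax n f Finset.univ = ⨆ i, lvec n f i :=
  Finset.sup_univ_eq_iSup _

lemma map_subsequence_eq_infinitePi {Ω α : Type*} [MeasurableSpace Ω] [MeasurableSpace α]
    {μ : Measure Ω} {A : ℤ → Ω → α} (hmeas : ∀ n, Measurable (A n)) (hindep : iIndepFun A μ)
    (hident : ∀ n, μ.map (A n) = μ.map (A 0)) {σ : ℕ → ℤ} (hσ : σ.Injective) :
    μ.map (fun ω k => A (σ k) ω) = Measure.infinitePi fun _ : ℕ => μ.map (A 0) := by
  have := (hindep.precomp hσ).map_fun_eq_infinitePi_map fun k => hmeas (σ k)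
  simpa only [hident] using this

/-- Law of the maximum of `x(n, 0)`, read along the reversed sequence. -/
lemma measureReal_iSup_xvec_mem {Ω : Type*} [MeasurableSpace Ω] {μ : Measure Ω}
    {A : ℤ → Ω → Fin d → Fin d → EReal} (hmeas : ∀ n, Measurable (A n)) (hindep : iIndepFun A μ)
    (hident : ∀ n, μ.map (A n) = μ.map (A 0)) (n : ℕ) {s : Set EReal} (hs : MeasurableSet s) :
    μ.real {ω | (⨆ i, xvec (fun m => A (m : ℤ) ω) n i) ∈ s} =
      (Measure.infinitePi fun _ : ℕ => μ.map (A 0)).real {f | setMax n f Finset.univ ∈ s} := by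
  have hσ : Function.Injective fun k : ℕ => (n : ℤ) - 1 - k := fun a b h => by
    simpa using h
  rw [← map_subsequence_eq_infinitePi hmeas hindep hident hσ,
    map_measureReal_apply (measurable_pi_iff.2 fun k => hmeas _)
      (show MeasurableSet {f | setMax n f Finset.univ ∈ s} from measurable_setMax n _ hs)]
  congr 1
  ext ω
  simp only [Set.mem_preimage, Set.mem_ofPred_eq, setMax_univ_eq_iSup,
    xvec_eq_lvec (fun m => A m ω)]

variable {Ω : Type*} [MeasurableSpace Ω] {μ : Measure Ω} [IsProbabilityMeasure μ]
  {X : ℕ → Ω → EReal} {γ : EReal}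

lemma tendsto_measureReal_ge_of_ae_tendsto_mpScale (hX : ∀ n, Measurable (X n))
    (h : ∀ᵐ ω ∂μ, Tendsto (fun n => mpScale n (X n ω)) atTop (𝓝 γ)) {c : ℝ} (hc : c < γ) :
    Tendsto (fun n : ℕ => μ.real {ω | ((c * n : ℝ) : EReal) ≤ X n ω}) atTop (𝓝 1) := by
  have := tendsto_measure_of_ae_tendsto_indicator_of_isFiniteMeasure atTop (μ := μ)
    (As := fun n : ℕ => {ω | ((c * n : ℝ) : EReal) ≤ X n ω}) MeasurableSet.univ
    (fun n => measurableSet_le measurable_const (hX n)) (by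
      filter_upwards [h] with ω hω
      filter_upwards [hω.eventually (lt_mem_nhds hc), eventually_gt_atTop 0] with n hn hn0
      simpa using ((lt_mpScale_iff hn0 _ _).1 hn).le)
  simpa [measureReal_def, Function.comp_def] using
    (ENNReal.tendsto_toReal (measure_ne_top μ _)).comp this

lemma tendsto_measureReal_gt_of_ae_tendsto_mpScale (hX : ∀ n, Measurable (X n))
    (h : ∀ᵐ ω ∂μ, Tendsto (fun n => mpScale n (X n ω)) atTop (𝓝 γ)) {c : ℝ} (hc : γ < c) :
    Tendsto (fun n : ℕ => μ.real {ω | ((c * n : ℝ) : EReal) < X n ω}) atTop (𝓝 0) := by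
  have := tendsto_measure_of_ae_tendsto_indicator_of_isFiniteMeasure atTop (μ := μ)
    (As := fun n : ℕ => {ω | ((c * n : ℝ) : EReal) < X n ω}) MeasurableSet.empty
    (fun n => measurableSet_lt measurable_const (hX n)) (by
      filter_upwards [h] with ω hω
      filter_upwards [hω.eventually (gt_mem_nhds hc), eventually_gt_atTop 0] with n hn hn0
      simpa using ((mpScale_lt_iff hn0 _ _).1 hn).le)
  simpa [measureReal_def, Function.comp_def] using
    (ENNReal.tendsto_toReal (measure_ne_top μ _)).comp this

/-- Convergence of `x n / n` follows from linear bounds at all rational rates. -/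
lemma tendsto_mpScale_of_bounds {x : ℕ → EReal}
    (hlow : ∀ q : ℚ, ((q : ℝ) : EReal) < γ →
      ∃ K : ℕ, ∀ n : ℕ, (((q : ℝ) * n - K : ℝ) : EReal) ≤ x n)
    (hupp : ∀ q : ℚ, γ < ((q : ℝ) : EReal) → ∀ᶠ n : ℕ in atTop, x n ≤ (((q : ℝ) * n : ℝ) : EReal)) :
    Tendsto (fun n => mpScale n (x n)) atTop (𝓝 γ) := by
  refine tendsto_order.2 ⟨fun a ha => ?_, fun a ha => ?_⟩
  · obtain ⟨p, hap, hp⟩ := EReal.lt_iff_exists_rat_btwn.1 ha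
    obtain ⟨q, hpq, hq⟩ := EReal.lt_iff_exists_rat_btwn.1 hp
    obtain ⟨K, hK⟩ := hlow q hq
    have hpq' : (0 : ℝ) < q - p := sub_pos.2 (EReal.coe_lt_coe_iff.1 hpq)
    obtain ⟨N, hN⟩ := exists_nat_gt ((K : ℝ) / (q - p))
    filter_upwards [eventually_ge_atTop N, eventually_gt_atTop 0] with n hn hn0
    refine hap.trans ((lt_mpScale_iff hn0 _ _).2 (lt_of_lt_of_le ?_ (hK n)))
    rw [EReal.coe_lt_coe_iff]
    have : (N : ℝ) ≤ n := by exact_mod_cast hn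
    rw [div_lt_iff₀ hpq'] at hN
    nlinarith
  · obtain ⟨p, hp, hpa⟩ := EReal.lt_iff_exists_rat_btwn.1 ha
    obtain ⟨q, hq, hqp⟩ := EReal.lt_iff_exists_rat_btwn.1 hp
    have hpq' : (q : ℝ) < p := EReal.coe_lt_coe_iff.1 hqp
    filter_upwards [hupp q hq, eventually_gt_atTop 0] with n hn hn0
    refine ((mpScale_lt_iff hn0 _ _).2 (hn.trans_lt ?_)).trans hpa
    rw [EReal.coe_lt_coe_iff]
    have : (0 : ℝ) < n := by exact_mod_cast hn0
    gcongr

end Transfer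

/-- **Theorem (Hong; strongly connected i.i.d. case).**
If `(A(n))_{n∈ℤ}` are i.i.d. random `d × d` matrices over `ℝ_max` with the positive part of
`max_{ij} A_{ij}(0)` integrable, `A(0)` a.s. has at least one finite entry on each row, and
`𝒢(A)` is strongly connected, then `(1/n) y_i(n,0) → γ(A)` a.s. for every `i`. -/
theorem hong_strongly_connected
    {d : ℕ} {Ω : Type*} [MeasurableSpace Ω] (μ : Measure Ω) [IsProbabilityMeasure μ]
    (A : ℤ → Ω → Fin d → Fin d → EReal)
    (hmeas : ∀ n, Measurable (A n))
    (hindep : iIndepFun A μ)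
    (hident : ∀ n, μ.map (A n) = μ.map (A 0))
    (hnotop : ∀ n ω i j, A n ω i j ≠ ⊤)
    (hrow : ∀ n, ∀ᵐ ω ∂μ, ∀ i, ∃ j, A n ω i j ≠ ⊥)
    (hint : Integrable (fun ω => ((⨆ i, ⨆ j, A 0 ω i j) ⊔ 0).toReal) μ)
    (hsc : ∀ i j : Fin d, Relation.ReflTransGen (arcRel μ (A 0)) i j)
    (γA : EReal)
    (hγA : ∀ᵐ ω ∂μ, Tendsto
      (fun n => mpScale n (⨆ i, xvec (fun m => A (m : ℤ) ω) n i)) atTop (𝓝 γA)) :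
    ∀ i, ∀ᵐ ω ∂μ,
      Tendsto (fun n => mpScale n (lvec n (fun k => A (-(k + 1) : ℤ) ω) i)) atTop (𝓝 γA) := by
  intro i
  set P := μ.map (A 0) with hP
  have : IsProbabilityMeasure P := Measure.isProbabilityMeasure_map (hmeas 0).aemeasurable
  have hentry (i j : Fin d) : Measurable fun M : Fin d → Fin d → EReal => M i j := by fun_prop
  have htop : ∀ᵐ M ∂P, ∀ i j, M i j ≠ ⊤ := by
    refine (ae_map_iff (hmeas 0).aemeasurable ?_).2 (.of_forall (hnotop 0))
    simp only [Set.ofPred_forall]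
    exact .iInter fun i => .iInter fun j => (hentry i j (measurableSet_singleton ⊤)).compl
  have hrowP : ∀ᵐ M ∂P, ∀ i, ∃ j, M i j ≠ ⊥ := by
    refine (ae_map_iff (hmeas 0).aemeasurable ?_).2 (hrow 0)
    simp only [Set.ofPred_forall, Set.ofPred_exists]
    exact .iInter fun i => .iUnion fun j => (hentry i j (measurableSet_singleton ⊥)).compl
  have hintP : Integrable posMax P :=
    (integrable_map_measure measurable_posMax.aestronglyMeasurable (hmeas 0).aemeasurable).2 hint
  have hscP (i j : Fin d) : Relation.ReflTransGen (arcRel P fun M => M) i j := by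
    refine Relation.ReflTransGen.mono (fun a b hab => ?_) i j (hsc i j)
    rw [arcRel, hP, Measure.map_apply (hmeas 0) (show MeasurableSet {M | M a b ≠ ⊥} from
      (hentry a b (measurableSet_singleton ⊥)).compl)]
    exact hab
  have hxmeas (n : ℕ) : Measurable fun ω => ⨆ i, xvec (fun m => A (m : ℤ) ω) n i := by
    refine Measurable.iSup fun i => ?_
    convert (measurable_lvec n i).comp
      (measurable_pi_iff.2 fun k : ℕ => hmeas (n - 1 - k)) using 2 with ω
    rw [xvec_eq_lvec (fun m => A m ω)]
    rfl
  have hlow (q : ℚ) (hq : ((q : ℝ) : EReal) < γA) :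
      ∀ᵐ f ∂(Measure.infinitePi fun _ : ℕ => P), f ∈ growsFrom (q : ℝ) {i} := by
    obtain ⟨p, hqp, hp⟩ := EReal.lt_iff_exists_real_btwn.1 hq
    have hlim := tendsto_measureReal_ge_of_ae_tendsto_mpScale hxmeas hγA hp
    refine ae_mem_growsFrom_singleton htop hrowP hintP hscP (EReal.coe_lt_coe_iff.1 hqp)
      (hlim.congr fun n => ?_) i
    exact measureReal_iSup_xvec_mem hmeas hindep hident n measurableSet_Ici
  have hupp (q : ℚ) (hq : γA < ((q : ℝ) : EReal)) :
      ∀ᵐ f ∂(Measure.infinitePi fun _ : ℕ => P), ∀ᶠ n : ℕ in atTop,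
        setMax n f Finset.univ ≤ (((q : ℝ) * n : ℝ) : EReal) := by
    obtain ⟨p, hp, hpq⟩ := EReal.lt_iff_exists_real_btwn.1 hq
    have hlim := tendsto_measureReal_gt_of_ae_tendsto_mpScale hxmeas hγA hp
    refine ae_eventually_setMax_univ_le htop hintP (EReal.coe_lt_coe_iff.1 hpq)
      (hlim.congr fun n => ?_)
    exact measureReal_iSup_xvec_mem hmeas hindep hident n measurableSet_Ioi
  have hσ : Function.Injective fun k : ℕ => (-(k + 1) : ℤ) := fun a b h => by
    simpa using h
  have hlaw := map_subsequence_eq_infinitePi hmeas hindep hident hσ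
  have hae : ∀ᵐ f ∂(Measure.infinitePi fun _ : ℕ => P),
      Tendsto (fun n => mpScale n (lvec n f i)) atTop (𝓝 γA) := by
    filter_upwards [ae_all_iff.2 fun q : ℚ => ae_all_iff.2 (hlow q),
      ae_all_iff.2 fun q : ℚ => ae_all_iff.2 (hupp q)] with f hfl hfu
    refine tendsto_mpScale_of_bounds (fun q hq => ?_) fun q hq => ?_
    · simpa [growsFrom, setMax] using hfl q hq
    · filter_upwards [hfu q hq] with n hn
      exact (Finset.le_sup (Finset.mem_univ i)).trans hn
  rw [← hlaw] at hae
  exact ae_of_ae_map (measurable_pi_iff.2 fun k => hmeas _).aemeasurable hae
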